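/- arXiv:1311.7084 — 4 statements merged into one kernel-verified Lean document; each statement's English description precedes it below -/
import Mathlib

section
/- There is an absolute constant C > 0 such that for every ε ∈ (0,1) there exist positive integers s ≤ C/ε and ℓ ≤ C/ε² with the following property. Let q be a prime power with ℓ dividing q−1, let γ generate F_q^*, let N = (q−1)/ℓ and ζ = γ^N, and let k and a be positive integers with a dividing k such that there exists a monic irreducible R ∈ F_q[X] with deg R ≥ k dividing X^{q^a} − ζX. Then there exists a set ℱ of polynomials in F_q[X] of degree at most k−1 with |ℱ| ≥ q^{(1−ε)k} such that for every array (y_{i,j}) ∈ F_q^{ℓ×N}, the number of f ∈ ℱ for which |{j ∈ {0,…,N−1} : f(ζ^i γ^j) = y_{i,j} for all 0 ≤ i < ℓ}| ≥ (k/(ℓN) + ε)·N is at most (C/ε)^{C/ε}. -/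
open Polynomial

/-!
Put `ζ = γ ^ N`, an element of order `ℓ`, with `s ≈ 1 / ε` and `ℓ = 8 s ^ 2`. Multiplication by `ζ`
permutes the `ℓ` evaluation points of a column, so an array `y` determines, at each point `x` of a
column on which `f` agrees with `y`, all the values `f (ζ ^ t x)`. Interpolation produces
polynomials `A₀, …, A_{s-1}`, not all zero and depending only on `y`, such that
`∑ A_t(x) f (ζ ^ t x) = 0` at all these points; by degree, every `f` that agrees with `y` on enough
columns solves the `q`-difference equation `∑ A_t(X) f (ζ ^ t X) = 0`. Divide out the largest common
power of `X`. The coefficient of `X ^ r` in a solution is then determined by the lower ones, unless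
`ζ ^ r` is a root of the indicial polynomial `∑ A_t(0) Z ^ t`; since this polynomial has fewer than
`s` roots, that happens for only about `s k / ℓ` exponents `r < k`.

Modulo `X ^ k` there are at most `q ^ (s k)` such equations, and each of them has at most
`q ^ (s (k / ℓ + 1))` solutions of degree less than `k`. Colour all polynomials of degree less than
`k` with `q ^ ⌊k / s⌋` colours at random: with positive probability no solution space contains
`4 s ^ 2` polynomials of the same colour, and the largest colour class is the required subcode.

For `k ≤ ℓ` the whole code works, because distinct codewords agree with `y` on disjoint sets of
columns.
-/

section Coloring

open Finset

theorem card_filter_forall_mem_eq_mul_pow {V κ : Type*} [Fintype V] [DecidableEq V] [Fintype κ]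
    [DecidableEq κ] (S : Finset V) (t : κ) :
    #{c : V → κ | ∀ x ∈ S, c x = t} * Fintype.card κ ^ #S = Fintype.card κ ^ Fintype.card V := by
  have hpi : ({c : V → κ | ∀ x ∈ S, c x = t} : Finset _) =
      Fintype.piFinset fun x => if x ∈ S then {t} else univ := by
    ext c
    simp only [mem_filter, mem_univ, true_and, Fintype.mem_piFinset]
    exact forall_congr' fun x => by by_cases hx : x ∈ S <;> simp [hx]
  rw [hpi, Fintype.card_piFinset]
  simp only [apply_ite card, card_singleton, card_univ, prod_ite, prod_const, one_pow, one_mul]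
  rw [← pow_add, filter_notMem_eq_sdiff, ← compl_eq_univ_sdiff, card_compl_add_card]

-- A uniformly random colouring works with positive probability, by the union bound.
theorem exists_coloring_forall_exists_ne {V κ : Type*} [Finite V] [Fintype κ] [Nonempty κ]
    {𝒮 : Finset (Finset V)} {m : ℕ} (hm : ∀ S ∈ 𝒮, #S = m)
    (hcard : #𝒮 * Fintype.card κ < Fintype.card κ ^ m) :
    ∃ c : V → κ, ∀ S ∈ 𝒮, ∀ t, ∃ x ∈ S, c x ≠ t := by
  classical
  have := Fintype.ofFinite V
  let monochromatic (p : Finset V × κ) : Finset (V → κ) := {c | ∀ x ∈ p.1, c x = p.2}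
  have hbad : #((𝒮 ×ˢ univ).biUnion monochromatic) * Fintype.card κ ^ m <
      #(univ : Finset (V → κ)) * Fintype.card κ ^ m :=
    calc #((𝒮 ×ˢ univ).biUnion monochromatic) * Fintype.card κ ^ m
        ≤ (∑ p ∈ 𝒮 ×ˢ univ, #(monochromatic p)) * Fintype.card κ ^ m := by
          gcongr
          exact card_biUnion_le
      _ = ∑ _p ∈ 𝒮 ×ˢ (univ : Finset κ), Fintype.card κ ^ Fintype.card V := by
          rw [sum_mul]
          refine sum_congr rfl fun p hp => ?_
          rw [← hm p.1 (mem_product.1 hp).1]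
          exact card_filter_forall_mem_eq_mul_pow p.1 p.2
      _ = #𝒮 * Fintype.card κ * Fintype.card κ ^ Fintype.card V := by
          rw [sum_const, card_product, card_univ, smul_eq_mul]
      _ < Fintype.card κ ^ m * Fintype.card κ ^ Fintype.card V :=
          Nat.mul_lt_mul_of_pos_right hcard (pow_pos Fintype.card_pos _)
      _ = #(univ : Finset (V → κ)) * Fintype.card κ ^ m := by
          rw [card_univ, Fintype.card_fun, mul_comm]
  obtain ⟨c, -, hc⟩ := exists_mem_notMem_of_card_lt_card (lt_of_mul_lt_mul_right' hbad)
  refine ⟨c, fun S hS t => ?_⟩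
  by_contra! hmono
  exact hc (mem_biUnion.2
    ⟨(S, t), mem_product.2 ⟨hS, mem_univ t⟩, mem_filter.2 ⟨mem_univ c, hmono⟩⟩)

theorem exists_large_finset_forall_not_subset {V : Type*} [Fintype V] {𝒮 : Finset (Finset V)}
    {m T : ℕ} (hT : 0 < T) (hm : ∀ S ∈ 𝒮, #S = m)
    (hcard : #𝒮 * T < T ^ m) :
    ∃ F : Finset V, Fintype.card V ≤ T * #F ∧ ∀ S ∈ 𝒮, ¬S ⊆ F := by
  classical
  have : Nonempty (Fin T) := ⟨⟨0, hT⟩⟩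
  obtain ⟨c, hc⟩ := exists_coloring_forall_exists_ne (κ := Fin T) hm (by simpa using hcard)
  have hT' : (0 : ℚ) < T := Nat.cast_pos.2 hT
  obtain ⟨t, ht⟩ := Fintype.exists_le_card_fiber_of_nsmul_le_card c
    (b := (Fintype.card V / T : ℚ)) (by simp [mul_div_cancel₀ _ hT'.ne'])
  refine ⟨({x | c x = t} : Finset V), ?_, fun S hS hsub => ?_⟩
  · rw [div_le_iff₀' hT'] at ht
    exact_mod_cast ht
  · obtain ⟨x, hxS, hxt⟩ := hc S hS t
    exact hxt (mem_filter.1 (hsub hxS)).2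

end Coloring

theorem exists_large_set_ncard_inter_lt {V ι : Type*} [Finite V] [Finite ι] {H : ι → Set V}
    {h m T : ℕ} (hT : 0 < T) (hH : ∀ i, (H i).ncard ≤ h)
    (hcard : Nat.card ι * h.choose m * T < T ^ m) :
    ∃ F : Set V, Nat.card V ≤ T * F.ncard ∧ ∀ i, (F ∩ H i).ncard < m := by
  classical
  have := Fintype.ofFinite V
  have := Fintype.ofFinite ι
  let 𝒮 : Finset (Finset V) := Finset.univ.biUnion fun i => (H i).toFinset.powersetCard m
  have h𝒮 : 𝒮.card ≤ Nat.card ι * h.choose m := by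
    rw [Nat.card_eq_fintype_card, ← Finset.card_univ]
    refine Finset.card_biUnion_le_card_mul _ _ _ fun i _ => ?_
    rw [Finset.card_powersetCard, ← Set.ncard_eq_toFinset_card']
    exact Nat.choose_le_choose m (hH i)
  have hm : ∀ S ∈ 𝒮, S.card = m := fun S hS => by
    obtain ⟨i, -, hi⟩ := Finset.mem_biUnion.1 hS
    exact (Finset.mem_powersetCard.1 hi).2
  obtain ⟨F, hF, hFS⟩ := exists_large_finset_forall_not_subset hT hm
    ((Nat.mul_le_mul_right T h𝒮).trans_lt hcard)
  refine ⟨F, by simpa [Nat.card_eq_fintype_card] using hF, fun i => ?_⟩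
  by_contra! hge
  rw [Set.ncard_eq_toFinset_card'] at hge
  obtain ⟨S, hS, hSm⟩ := Finset.exists_subset_card_eq hge
  simp only [Set.toFinset_inter, Finset.toFinset_coe, Finset.subset_inter_iff] at hS
  exact hFS S (Finset.mem_biUnion.2 ⟨i, Finset.mem_univ i, Finset.mem_powersetCard.2 ⟨hS.2, hSm⟩⟩)
    hS.1

section PolynomialLemmas

theorem card_filter_isRoot_pow_le {R : Type*} [CommRing R] [IsDomain R] [DecidableEq R] {P : R[X]}
    (hP : P ≠ 0) {z : R} (hz : 0 < orderOf z) (k : ℕ) :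
    ((Finset.range k).filter fun r => P.IsRoot (z ^ r)).card
      ≤ P.natDegree * (k / orderOf z + 1) := by
  calc ((Finset.range k).filter fun r => P.IsRoot (z ^ r)).card
      ≤ (P.roots.toFinset ×ˢ Finset.range (k / orderOf z + 1)).card := by
        refine Finset.card_le_card_of_injOn (fun r => (z ^ r, r / orderOf z)) ?_ ?_
        · intro r hr
          obtain ⟨hrk, hroot⟩ := Finset.mem_filter.1 hr
          have hdiv : r / orderOf z ≤ k / orderOf z :=
            Nat.div_le_div_right (Finset.mem_range.1 hrk).le
          exact Finset.mem_product.2 ⟨Multiset.mem_toFinset.2 ((mem_roots hP).2 hroot),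
            Finset.mem_range.2 (Nat.lt_succ_of_le hdiv)⟩
        · intro r _ r' _ h
          obtain ⟨hpow, hdiv⟩ := Prod.mk.inj h
          have hmod : r % orderOf z = r' % orderOf z :=
            pow_injOn_Iio_orderOf (Nat.mod_lt _ hz) (Nat.mod_lt _ hz)
              (by simpa only [pow_mod_orderOf] using hpow)
          rw [← Nat.div_add_mod r (orderOf z), hdiv, hmod, Nat.div_add_mod]
    _ ≤ P.natDegree * (k / orderOf z + 1) := by
        rw [Finset.card_product, Finset.card_range]
        gcongr
        exact (Multiset.toFinset_card_le _).trans (card_roots' P)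

theorem mul_mem_degreeLT_add {R : Type*} [Semiring R] {p q : R[X]} {m n : ℕ}
    (hp : p ∈ degreeLT R (m + 1)) (hq : q ∈ degreeLT R n) : p * q ∈ degreeLT R (m + n) := by
  rw [mem_degreeLT, degree_lt_iff_coeff_zero] at *
  intro r hr
  rw [coeff_mul]
  refine Finset.sum_eq_zero fun ⟨i, j⟩ hij => ?_
  rw [Finset.HasAntidiagonal.mem_antidiagonal] at hij
  rcases le_or_gt n j with hj | hj
  · rw [hq j hj, mul_zero]
  · rw [hp i (by omega), zero_mul]

theorem finrank_degreeLT (R : Type*) [Ring R] [StrongRankCondition R] (n : ℕ) :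
    Module.finrank R (degreeLT R n) = n := by
  rw [Module.finrank_eq_card_basis (degreeLT.basis R n), Fintype.card_fin]

theorem natCard_degreeLT (R : Type*) [Semiring R] (n : ℕ) :
    Nat.card (degreeLT R n) = Nat.card R ^ n := by
  rw [Nat.card_congr (degreeLTEquiv R n).toEquiv, Nat.card_fun, Nat.card_fin]

theorem modByMonic_X_pow_mem_degreeLT {R : Type*} [CommRing R] [Nontrivial R] (p : R[X]) (k : ℕ) :
    p %ₘ X ^ k ∈ degreeLT R k := by
  rw [mem_degreeLT, ← degree_X_pow (R := R) k]
  exact degree_modByMonic_lt p (monic_X_pow k)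

theorem coeff_zero_modByMonic_X_pow {R : Type*} [CommRing R] {k : ℕ} (hk : 0 < k) (p : R[X]) :
    (p %ₘ X ^ k).coeff 0 = p.coeff 0 := by
  conv_rhs => rw [← modByMonic_add_div p (X ^ k)]
  simp [hk.ne]

theorem exists_eq_X_pow_mul_and_coeff_zero_ne_zero {R ι : Type*} [Semiring R] {A : ι → R[X]}
    (hA : A ≠ 0) :
    ∃ (e : ℕ) (B : ι → R[X]), (∀ i, A i = X ^ e * B i) ∧ ∃ i, (B i).coeff 0 ≠ 0 := by
  classical
  have hex : ∃ e i, (A i).coeff e ≠ 0 := by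
    by_contra! h
    exact hA (funext fun i => Polynomial.ext fun e => by simpa using h e i)
  have hdvd : ∀ i, X ^ Nat.find hex ∣ A i := fun i =>
    X_pow_dvd_iff.2 fun d hd => not_not.1 (not_exists.1 (Nat.find_min hex hd) i)
  choose B hB using hdvd
  obtain ⟨i, hi⟩ := Nat.find_spec hex
  refine ⟨Nat.find hex, B, hB, i, fun h => hi ?_⟩
  rw [hB i, coeff_X_pow_mul', if_pos le_rfl, Nat.sub_self, h]

theorem exists_ne_zero_forall_sum_eval_mul_eq_zero {K ι : Type*} [Field K] [Fintype ι] {s d : ℕ}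
    (hcard : Fintype.card ι < s * d) (x : ι → K) (Y : ι → Fin s → K) :
    ∃ A : Fin s → K[X], A ≠ 0 ∧ (∀ t, A t ∈ degreeLT K d) ∧
      ∀ p, ∑ t, (A t).eval (x p) * Y p t = 0 := by
  let Φ : (Fin s → degreeLT K d) →ₗ[K] ι → K := LinearMap.pi fun p =>
    ∑ t, Y p t • leval (x p) ∘ₗ (degreeLT K d).subtype ∘ₗ LinearMap.proj t
  have hker : Φ.ker ≠ ⊥ := LinearMap.ker_ne_bot_of_finrank_lt (by
    simpa [Module.finrank_pi_fintype, finrank_degreeLT] using hcard)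
  obtain ⟨a, ha, ha0⟩ := (Submodule.ne_bot_iff _).1 hker
  refine ⟨fun t => a t, fun h => ha0 (funext fun t => Subtype.ext (congrFun h t)),
    fun t => (a t).2, fun p => ?_⟩
  simpa [Φ, mul_comm] using congrFun (LinearMap.mem_ker.1 ha) p

end PolynomialLemmas

section QDifference

variable {R : Type*} [CommSemiring R] {s : ℕ}

/-- The linear `q`-difference operator `f ↦ ∑ i, B i * f (z ^ i X)` with polynomial coefficients. -/
noncomputable def qDifferenceOp (z : R) (B : Fin s → R[X]) : R[X] →ₗ[R] R[X] :=
  ∑ i, LinearMap.mulLeft R (B i) ∘ₗ (aeval (C (z ^ (i : ℕ)) * X)).toLinearMap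

theorem qDifferenceOp_apply (z : R) (B : Fin s → R[X]) (f : R[X]) :
    qDifferenceOp z B f = ∑ i, B i * f.comp (C (z ^ (i : ℕ)) * X) := by
  simp [qDifferenceOp, comp_eq_aeval]

theorem qDifferenceOp_mul_left (z : R) (p : R[X]) (B : Fin s → R[X]) (f : R[X]) :
    qDifferenceOp z (fun i => p * B i) f = p * qDifferenceOp z B f := by
  simp only [qDifferenceOp_apply, Finset.mul_sum, mul_assoc]

theorem eval_qDifferenceOp (z : R) (B : Fin s → R[X]) (f : R[X]) (x : R) :
    (qDifferenceOp z B f).eval x = ∑ i, (B i).eval x * f.eval (z ^ (i : ℕ) * x) := by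
  simp [qDifferenceOp_apply, eval_finsetSum]

theorem qDifferenceOp_mem_degreeLT_add {z : R} {B : Fin s → R[X]} {f : R[X]} {D k : ℕ}
    (hB : ∀ i, B i ∈ degreeLT R (D + 1)) (hf : f ∈ degreeLT R k) :
    qDifferenceOp z B f ∈ degreeLT R (D + k) := by
  rw [qDifferenceOp_apply]
  refine Submodule.sum_mem _ fun i _ => mul_mem_degreeLT_add (hB i) ?_
  rw [mem_degreeLT, degree_lt_iff_coeff_zero] at hf ⊢
  intro r hr
  rw [comp_C_mul_X_coeff, hf r hr, zero_mul]

/-- The indicial polynomial of the `q`-difference operator with coefficients `B`: the operator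
multiplies the lowest-order term of a series of order `r` by the value of this polynomial at
`z ^ r`. -/
noncomputable def indicialPoly (B : Fin s → R[X]) : R[X] :=
  ∑ i : Fin s, C ((B i).coeff 0) * X ^ (i : ℕ)

theorem coeff_indicialPoly (B : Fin s → R[X]) (i : Fin s) :
    (indicialPoly B).coeff i = (B i).coeff 0 := by
  simp [indicialPoly, finsetSum_coeff, Fin.val_inj]

theorem indicialPoly_ne_zero {B : Fin s → R[X]} (hB : ∃ i, (B i).coeff 0 ≠ 0) :
    indicialPoly B ≠ 0 := by
  obtain ⟨i, hi⟩ := hB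
  intro h
  rw [← coeff_indicialPoly, h, coeff_zero] at hi
  exact hi rfl

theorem coeff_qDifferenceOp_X_pow_mul (z : R) (B : Fin s → R[X]) (r : ℕ) (g : R[X]) :
    (qDifferenceOp z B (X ^ r * g)).coeff r = (indicialPoly B).eval (z ^ r) * g.coeff 0 := by
  rw [qDifferenceOp_apply, finsetSum_coeff, indicialPoly, eval_finsetSum, Finset.sum_mul]
  refine Finset.sum_congr rfl fun i _ => ?_
  have hfactor : B i * (X ^ r * g).comp (C (z ^ (i : ℕ)) * X) =
      X ^ r * (B i * C ((z ^ r) ^ (i : ℕ)) * g.comp (C (z ^ (i : ℕ)) * X)) := by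
    rw [mul_comp, X_pow_comp, mul_pow, ← C_pow, pow_right_comm]
    ring
  rw [hfactor, coeff_X_pow_mul', if_pos le_rfl, Nat.sub_self, mul_coeff_zero, mul_coeff_zero,
    comp_C_mul_X_coeff, coeff_C_zero]
  simp

end QDifference

section TruncatedKernel

theorem X_pow_dvd_of_X_pow_dvd_qDifferenceOp {R : Type*} [CommRing R] [IsDomain R] {s k : ℕ}
    {z : R} {B : Fin s → R[X]} {f : R[X]} (hf : X ^ k ∣ qDifferenceOp z B f)
    (hroot : ∀ r < k, (indicialPoly B).IsRoot (z ^ r) → f.coeff r = 0) : X ^ k ∣ f := by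
  suffices h : ∀ r ≤ k, X ^ r ∣ f from h k le_rfl
  intro r hr
  induction r with
  | zero => simp
  | succ r ih =>
    obtain ⟨g, rfl⟩ := ih (by omega)
    rw [pow_succ]
    refine mul_dvd_mul_left _ (X_dvd_iff.2 ?_)
    have hcoeff := X_pow_dvd_iff.1 hf r hr
    rw [coeff_qDifferenceOp_X_pow_mul] at hcoeff
    rcases mul_eq_zero.1 hcoeff with hP | hg
    · simpa [coeff_X_pow_mul'] using hroot r hr hP
    · exact hg

variable {K : Type*} [Field K] {s k : ℕ}

/-- The polynomials `f` of degree less than `k` with `qDifferenceOp z B f ≡ 0` modulo `X ^ k`. -/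
noncomputable def truncatedKernel (z : K) (B : Fin s → K[X]) (k : ℕ) :
    Submodule K (degreeLT K k) :=
  ((Ideal.span {X ^ k}).restrictScalars K).comap (qDifferenceOp z B ∘ₗ (degreeLT K k).subtype)

theorem mem_truncatedKernel {z : K} {B : Fin s → K[X]} {f : degreeLT K k} :
    f ∈ truncatedKernel z B k ↔ X ^ k ∣ qDifferenceOp z B f := by
  simp [truncatedKernel, Ideal.mem_span_singleton]

theorem finrank_truncatedKernel_le {z : K} (hz : 0 < orderOf z) {B : Fin s → K[X]}
    (hB : ∃ i, (B i).coeff 0 ≠ 0) (k : ℕ) :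
    Module.finrank K (truncatedKernel z B k) ≤ s * (k / orderOf z + 1) := by
  classical
  let E := (Finset.range k).filter fun r => (indicialPoly B).IsRoot (z ^ r)
  let coeffs : truncatedKernel z B k →ₗ[K] E → K :=
    (LinearMap.pi fun r : E => lcoeff K r) ∘ₗ (degreeLT K k).subtype ∘ₗ
      (truncatedKernel z B k).subtype
  have hinj : Function.Injective coeffs := by
    rw [injective_iff_map_eq_zero]
    rintro ⟨⟨f, hdeg⟩, hf⟩ h0
    have hdvd : X ^ k ∣ f := X_pow_dvd_of_X_pow_dvd_qDifferenceOp (mem_truncatedKernel.1 hf)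
      fun r hr hroot => congrFun h0 ⟨r, Finset.mem_filter.2 ⟨Finset.mem_range.2 hr, hroot⟩⟩
    have hf0 : f = 0 := eq_zero_of_dvd_of_degree_lt hdvd (by
      rw [degree_X_pow]; exact mem_degreeLT.1 hdeg)
    simp [hf0]
  have hdeg : (indicialPoly B).natDegree ≤ s :=
    natDegree_le_of_degree_le (degree_sum_fin_lt fun i => (B i).coeff 0).le
  calc Module.finrank K (truncatedKernel z B k)
      ≤ E.card := by simpa using LinearMap.finrank_le_finrank_of_injective hinj
    _ ≤ (indicialPoly B).natDegree * (k / orderOf z + 1) :=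
        card_filter_isRoot_pow_le (indicialPoly_ne_zero hB) hz k
    _ ≤ s * (k / orderOf z + 1) := by gcongr

theorem mem_truncatedKernel_modByMonic {z : K} {B : Fin s → K[X]} {f : degreeLT K k}
    (hf : qDifferenceOp z B f = 0) : f ∈ truncatedKernel z (fun i => B i %ₘ X ^ k) k := by
  have hsplit : qDifferenceOp z B f = qDifferenceOp z (fun i => B i %ₘ X ^ k) f +
      X ^ k * qDifferenceOp z (fun i => B i /ₘ X ^ k) f := by
    rw [← qDifferenceOp_mul_left]
    simp only [qDifferenceOp_apply, ← Finset.sum_add_distrib, ← add_mul, modByMonic_add_div]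
  rw [mem_truncatedKernel, ← dvd_add_left (dvd_mul_right _ _), ← hsplit, hf]
  exact dvd_zero _

theorem ncard_truncatedKernel_le [Finite K] {z : K} (hz : 0 < orderOf z) {B : Fin s → K[X]}
    (hB : ∃ i, (B i).coeff 0 ≠ 0) (k : ℕ) :
    (truncatedKernel z B k : Set (degreeLT K k)).ncard ≤
      Nat.card K ^ (s * (k / orderOf z + 1)) := by
  change Nat.card (truncatedKernel z B k) ≤ _
  rw [Module.natCard_eq_pow_finrank (K := K)]
  exact Nat.pow_le_pow_right Nat.card_pos (finrank_truncatedKernel_le hz hB k)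

theorem exists_large_set_ncard_inter_truncatedKernel_lt [Finite K] {z : K} (hz : 0 < orderOf z)
    (k : ℕ) {m e : ℕ} (hexp : k * s + s * (k / orderOf z + 1) * m + e < e * m) :
    ∃ F : Set (degreeLT K k), Nat.card K ^ k ≤ Nat.card K ^ e * F.ncard ∧
      ∀ B : Fin s → K[X], (∀ i, B i ∈ degreeLT K k) → (∃ i, (B i).coeff 0 ≠ 0) →
        (F ∩ truncatedKernel z B k).ncard < m := by
  have := Module.finite_of_finite K (M := degreeLT K k)
  let Operators := {b : Fin s → degreeLT K k // ∃ i, (b i : K[X]).coeff 0 ≠ 0}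
  have hoperators : Nat.card Operators ≤ Nat.card K ^ (k * s) := by
    refine (Finite.card_subtype_le _).trans_eq ?_
    rw [Nat.card_fun, natCard_degreeLT, Nat.card_fin, pow_mul]
  have hcount : Nat.card Operators * (Nat.card K ^ (s * (k / orderOf z + 1))).choose m *
      Nat.card K ^ e < (Nat.card K ^ e) ^ m := by
    calc Nat.card Operators * (Nat.card K ^ (s * (k / orderOf z + 1))).choose m * Nat.card K ^ e
        ≤ Nat.card K ^ (k * s) * (Nat.card K ^ (s * (k / orderOf z + 1))) ^ m *
            Nat.card K ^ e := by
          gcongr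
          exact Nat.choose_le_pow _ _
      _ = Nat.card K ^ (k * s + s * (k / orderOf z + 1) * m + e) := by
          rw [← pow_mul, ← pow_add, ← pow_add]
      _ < Nat.card K ^ (e * m) := Nat.pow_lt_pow_right Finite.one_lt_card hexp
      _ = (Nat.card K ^ e) ^ m := pow_mul _ _ _
  obtain ⟨F, hF, hFker⟩ := exists_large_set_ncard_inter_lt
    (H := fun b : Operators =>
      (truncatedKernel z (fun i => (b.1 i : K[X])) k : Set (degreeLT K k)))
    (pow_pos Nat.card_pos _) (fun b => ncard_truncatedKernel_le hz b.2 k) hcount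
  exact ⟨F, natCard_degreeLT K k ▸ hF, fun B hBdeg hB => hFker ⟨fun i => ⟨B i, hBdeg i⟩, hB⟩⟩

end TruncatedKernel

section FoldedCode

theorem injective_pow_mul_pow {M : Type*} [Monoid M] {γ : M} {ℓ N : ℕ} (hγ : orderOf γ = ℓ * N) :
    Function.Injective fun p : Fin ℓ × Fin N => (γ ^ N) ^ (p.1 : ℕ) * γ ^ (p.2 : ℕ) := by
  have hexp : ∀ p : Fin ℓ × Fin N,
      (γ ^ N) ^ (p.1 : ℕ) * γ ^ (p.2 : ℕ) = γ ^ (finProdFinEquiv p : ℕ) := fun p => by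
    rw [finProdFinEquiv_apply_val, ← pow_mul, ← pow_add, add_comm]
  have hlt : ∀ p : Fin ℓ × Fin N, (finProdFinEquiv p : ℕ) < orderOf γ := fun p => by
    rw [hγ]
    exact (finProdFinEquiv p).2
  intro p p' h
  simp only [hexp] at h
  exact finProdFinEquiv.injective (Fin.ext (pow_injOn_Iio_orderOf (hlt p) (hlt p') h))

variable {K : Type*} [Field K] {γ : K} {ℓ N : ℕ}

/-- The columns `j` at which the folded encoding `(f (ζ ^ i γ ^ j))` of `f`, with `ζ = γ ^ N`,
agrees with the received array `y`. -/
def agreementColumns (γ : K) (y : Fin ℓ → Fin N → K) (f : K[X]) : Set (Fin N) :=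
  {j | ∀ i : Fin ℓ, f.eval ((γ ^ N) ^ (i : ℕ) * γ ^ (j : ℕ)) = y i j}

-- `ζ ^ t` maps the evaluation points of a column to each other.
theorem eval_pow_mul_of_mem_agreementColumns (hγ : orderOf γ = ℓ * N) {y : Fin ℓ → Fin N → K}
    {f : K[X]} {j : Fin N} (hj : j ∈ agreementColumns γ y f) (i : Fin ℓ) (t : ℕ) :
    f.eval ((γ ^ N) ^ t * ((γ ^ N) ^ (i : ℕ) * γ ^ (j : ℕ))) =
      y ⟨(i + t) % ℓ, Nat.mod_lt _ i.pos⟩ j := by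
  have hζ : (γ ^ N) ^ ℓ = 1 := by rw [← pow_mul, mul_comm, ← hγ, pow_orderOf_eq_one]
  rw [← hj, ← mul_assoc, ← pow_add, add_comm t, ← pow_eq_pow_mod _ hζ]

theorem qDifferenceOp_eq_zero_of_le_mul_ncard (hγ : orderOf γ = ℓ * N) {s D k : ℕ}
    {A : Fin s → K[X]} (hA : ∀ t, A t ∈ degreeLT K (D + 1)) {y : Fin ℓ → Fin N → K}
    (hAy : ∀ p : Fin ℓ × Fin N, ∑ t, (A t).eval ((γ ^ N) ^ (p.1 : ℕ) * γ ^ (p.2 : ℕ)) *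
      y ⟨(p.1 + t) % ℓ, Nat.mod_lt _ p.1.pos⟩ p.2 = 0)
    {f : K[X]} (hf : f ∈ degreeLT K k) (hagree : D + k ≤ ℓ * (agreementColumns γ y f).ncard) :
    qDifferenceOp (γ ^ N) A f = 0 := by
  classical
  let points : Finset (Fin ℓ × Fin N) := Finset.univ ×ˢ (agreementColumns γ y f).toFinset
  have hpoints : points.card = ℓ * (agreementColumns γ y f).ncard := by
    rw [Finset.card_product, Finset.card_fin, Set.ncard_eq_toFinset_card']
  refine eq_zero_of_degree_lt_of_eval_index_eq_zero points (injective_pow_mul_pow hγ).injOn ?_ ?_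
  · refine (mem_degreeLT.1 (qDifferenceOp_mem_degreeLT_add hA hf)).trans_le ?_
    exact_mod_cast hpoints ▸ hagree
  · intro p hp
    have hj : p.2 ∈ agreementColumns γ y f := Set.mem_toFinset.1 (Finset.mem_product.1 hp).2
    rw [eval_qDifferenceOp, ← hAy p]
    exact Finset.sum_congr rfl fun t _ => by rw [eval_pow_mul_of_mem_agreementColumns hγ hj]

theorem exists_qDifferenceOp_eq_zero (hγ : orderOf γ = ℓ * N) {s D : ℕ}
    (hD : ℓ * N < s * (D + 1)) (k : ℕ) (y : Fin ℓ → Fin N → K) :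
    ∃ B : Fin s → K[X], (∃ i, (B i).coeff 0 ≠ 0) ∧ ∀ f ∈ degreeLT K k,
      D + k ≤ ℓ * (agreementColumns γ y f).ncard → qDifferenceOp (γ ^ N) B f = 0 := by
  obtain ⟨A, hA0, hAdeg, hAy⟩ := exists_ne_zero_forall_sum_eval_mul_eq_zero (d := D + 1)
    (by simpa using hD) (fun p : Fin ℓ × Fin N => (γ ^ N) ^ (p.1 : ℕ) * γ ^ (p.2 : ℕ))
    fun p t => y ⟨(p.1 + t) % ℓ, Nat.mod_lt _ p.1.pos⟩ p.2
  obtain ⟨e, B, hAB, hB⟩ := exists_eq_X_pow_mul_and_coeff_zero_ne_zero hA0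
  refine ⟨B, hB, fun f hf hagree => ?_⟩
  have hzero := qDifferenceOp_eq_zero_of_le_mul_ncard hγ hAdeg hAy hf hagree
  rw [funext hAB, qDifferenceOp_mul_left] at hzero
  exact (mul_eq_zero.1 hzero).resolve_left (pow_ne_zero e X_ne_zero)

theorem exists_subcode_ncard_lt [Finite K] (hγ : orderOf γ = ℓ * N) (hpos : 0 < ℓ * N)
    {s m e k : ℕ} (hk : 0 < k) (hexp : k * s + s * (k / ℓ + 1) * m + e < e * m) :
    ∃ ℱ ⊆ (degreeLT K k : Set K[X]), Nat.card K ^ k ≤ Nat.card K ^ e * ℱ.ncard ∧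
      ∀ (y : Fin ℓ → Fin N → K) (D : ℕ), ℓ * N < s * (D + 1) →
        {f ∈ ℱ | D + k ≤ ℓ * (agreementColumns γ y f).ncard}.ncard < m := by
  have hζ : orderOf (γ ^ N) = ℓ := by
    have hN : 0 < N := Nat.pos_of_mul_pos_left hpos
    rw [orderOf_pow_of_dvd hN.ne' (hγ ▸ dvd_mul_left N ℓ), hγ, Nat.mul_div_cancel _ hN]
  have hζpos : 0 < orderOf (γ ^ N) := hζ ▸ Nat.pos_of_mul_pos_right hpos
  have := Module.finite_of_finite K (M := degreeLT K k)
  obtain ⟨F, hF, hFker⟩ := exists_large_set_ncard_inter_truncatedKernel_lt hζpos k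
    (hζ.symm ▸ hexp)
  refine ⟨Subtype.val '' F, Subtype.coe_image_subset _ F, ?_, fun y D hD => ?_⟩
  · rwa [Set.ncard_image_of_injective _ Subtype.val_injective]
  · obtain ⟨B, hB0, hB⟩ := exists_qDifferenceOp_eq_zero hγ hD k y
    refine lt_of_le_of_lt ?_ (hFker (fun i => B i %ₘ X ^ k)
      (fun i => modByMonic_X_pow_mem_degreeLT (B i) k)
      (hB0.imp fun i hi => by rwa [coeff_zero_modByMonic_X_pow hk]))
    rw [← Set.ncard_image_of_injective _ Subtype.val_injective]
    refine Set.ncard_le_ncard ?_ (Set.toFinite _)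
    rintro _ ⟨⟨f, hf, rfl⟩, hagree⟩
    exact ⟨f, ⟨hf, mem_truncatedKernel_modByMonic (hB f f.2 hagree)⟩, rfl⟩

theorem pairwiseDisjoint_agreementColumns (hγ : orderOf γ = ℓ * N) (y : Fin ℓ → Fin N → K) :
    (degreeLT K ℓ : Set K[X]).PairwiseDisjoint (agreementColumns γ y) := by
  intro f hf g hg hfg
  refine Set.disjoint_left.2 fun j hj hj' => hfg (sub_eq_zero.1 ?_)
  refine eq_zero_of_degree_lt_of_eval_index_eq_zero (Finset.univ : Finset (Fin ℓ))
    (v := fun i : Fin ℓ => (γ ^ N) ^ (i : ℕ) * γ ^ (j : ℕ)) ?_ ?_ fun i _ => ?_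
  · intro i _ i' _ h
    exact congrArg Prod.fst (injective_pow_mul_pow hγ (a₁ := (i, j)) (a₂ := (i', j)) h)
  · rw [Finset.card_fin]
    exact mem_degreeLT.1 (Submodule.sub_mem _ hf hg)
  · rw [eval_sub, hj i, hj' i, sub_self]

end FoldedCode

theorem ncard_mul_le_card_of_pairwiseDisjoint {α β : Type*} [Finite β] {S : Set α} {A : α → Set β}
    {t : ℝ} (hdisj : S.PairwiseDisjoint A) (ht : ∀ a ∈ S, t ≤ (A a).ncard) :
    S.ncard * t ≤ Nat.card β := by
  classical
  rcases S.finite_or_infinite with hS | hS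
  · lift S to Finset α using hS
    have := Fintype.ofFinite β
    have hdisj' : (S : Set α).PairwiseDisjoint fun a => (A a).toFinset := fun a ha b hb hab =>
      Set.disjoint_toFinset.2 (hdisj ha hb hab)
    calc (S : Set α).ncard * t = ∑ _a ∈ S, t := by
          rw [Set.ncard_coe_finset, Finset.sum_const, nsmul_eq_mul]
      _ ≤ ∑ a ∈ S, ((A a).toFinset.card : ℝ) :=
          Finset.sum_le_sum fun a ha => by rw [← Set.ncard_eq_toFinset_card']; exact ht a ha
      _ = (S.biUnion fun a => (A a).toFinset).card := by
          rw [Finset.card_biUnion hdisj', Nat.cast_sum]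
      _ ≤ Nat.card β := by
          rw [Nat.card_eq_fintype_card]
          exact_mod_cast Finset.card_le_univ _
  · simp [hS.ncard]

theorem rpow_le_of_pow_le_pow_mul {q k e n : ℕ} {ε : ℝ} (hq : 0 < q) (he : (e : ℝ) ≤ ε * k)
    (h : q ^ k ≤ q ^ e * n) : (q : ℝ) ^ ((1 - ε) * k) ≤ n := by
  have hq0 : (0 : ℝ) < q := Nat.cast_pos.2 hq
  refine le_of_mul_le_mul_left ?_ (pow_pos hq0 e)
  calc (q : ℝ) ^ e * (q : ℝ) ^ ((1 - ε) * k) = (q : ℝ) ^ ((e : ℝ) + (1 - ε) * k) := by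
        rw [Real.rpow_add hq0, Real.rpow_natCast]
    _ ≤ (q : ℝ) ^ (k : ℝ) :=
        Real.rpow_le_rpow_of_exponent_le (Nat.one_le_cast.2 hq) (by linarith)
    _ = (q : ℝ) ^ k := Real.rpow_natCast _ _
    _ ≤ (q : ℝ) ^ e * n := by exact_mod_cast h

theorem counting_exponent_lt {s k : ℕ} (hs : 0 < s) (hk : 8 * s ^ 2 ≤ k) :
    k * s + s * (k / (8 * s ^ 2) + 1) * (4 * s ^ 2) + k / s < k / s * (4 * s ^ 2) := by
  have ha : 1 ≤ k / (8 * s ^ 2) := (Nat.one_le_div_iff (by positivity)).2 hk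
  have hae : 8 * s * (k / (8 * s ^ 2)) ≤ k / s := by
    rw [Nat.le_div_iff_mul_le hs]
    calc 8 * s * (k / (8 * s ^ 2)) * s = 8 * s ^ 2 * (k / (8 * s ^ 2)) := by ring
      _ ≤ k := Nat.mul_div_le _ _
  have hek : k < s * (k / s + 1) := Nat.lt_mul_div_succ k hs
  generalize k / (8 * s ^ 2) = a at *
  generalize k / s = e at *
  have hfirst : k * s < s ^ 2 * (e + 1) := by nlinarith
  have hsecond : s * (a + 1) * (4 * s ^ 2) ≤ s ^ 2 * e := by
    calc s * (a + 1) * (4 * s ^ 2) ≤ s * (a + a) * (4 * s ^ 2) := by gcongr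
      _ = s ^ 2 * (8 * s * a) := by ring
      _ ≤ s ^ 2 * e := by gcongr
  have he : 1 ≤ e := le_trans (by nlinarith) hae
  calc k * s + s * (a + 1) * (4 * s ^ 2) + e < s ^ 2 * (e + 1) + s ^ 2 * e + e := by
        linarith
    _ ≤ s ^ 2 * (e + e) + s ^ 2 * e + s ^ 2 * e := by
        gcongr
        exact Nat.le_mul_of_pos_left e (by positivity)
    _ = e * (4 * s ^ 2) := by ring

theorem div_sq_le_rpow_div {C ε : ℝ} (hC : 2 ≤ C) (hε : 0 < ε) (hε1 : ε ≤ 1) :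
    C / ε ^ 2 ≤ (C / ε) ^ (C / ε) := by
  have hC' : C ≤ C / ε := le_div_self (by linarith) hε hε1
  calc C / ε ^ 2 ≤ C ^ 2 / ε ^ 2 := by
        gcongr
        nlinarith
    _ = (C / ε) ^ (2 : ℝ) := by rw [Real.rpow_two, div_pow]
    _ ≤ (C / ε) ^ (C / ε) := Real.rpow_le_rpow_of_exponent_le (by linarith) (by linarith)

section ListDecoding

variable {K : Type*} [Field K] {γ : K} {ε : ℝ}

theorem ncard_sep_agreement_le_of_le {s ℓ N k : ℕ} (hε : 1 ≤ s * ε) (hγ : orderOf γ = ℓ * N)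
    (hN : 0 < N) (hk : k ≤ ℓ) (y : Fin ℓ → Fin N → K) :
    {f ∈ (degreeLT K k : Set K[X]) |
      ((k : ℝ) / (ℓ * N) + ε) * N ≤ (agreementColumns γ y f).ncard}.ncard ≤ s := by
  let list : Set K[X] := {f ∈ (degreeLT K k : Set K[X]) |
    ((k : ℝ) / (ℓ * N) + ε) * N ≤ (agreementColumns γ y f).ncard}
  have hdisj : list.PairwiseDisjoint (agreementColumns γ y) :=
    (pairwiseDisjoint_agreementColumns hγ y).subset ((Set.sep_subset _ _).trans (degreeLT_mono hk))
  have hagree : ∀ f ∈ list, ε * N ≤ (agreementColumns γ y f).ncard := fun f hf => by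
    refine le_trans ?_ hf.2
    gcongr
    exact le_add_of_nonneg_left (by positivity)
  have hN' : (0 : ℝ) < N := Nat.cast_pos.2 hN
  have hlist : list.ncard * ε ≤ 1 := by
    refine le_of_mul_le_mul_right ?_ hN'
    simpa [mul_assoc] using ncard_mul_le_card_of_pairwiseDisjoint hdisj hagree
  have hε0 : 0 < ε := pos_of_mul_pos_right (one_pos.trans_le hε) s.cast_nonneg
  exact Nat.cast_le.1 (le_of_mul_le_mul_right (hlist.trans hε) hε0)

theorem floor_add_le_mul_of_div_add_mul_le {ℓ N k n : ℕ} (hε : 0 ≤ ε) (hℓ : 0 < ℓ) (hN : 0 < N)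
    (h : ((k : ℝ) / (ℓ * N) + ε) * N ≤ n) : ⌊ε * (ℓ * N : ℕ)⌋₊ + k ≤ ℓ * n := by
  suffices hreal : (⌊ε * (ℓ * N : ℕ)⌋₊ : ℝ) + k ≤ ℓ * n by exact_mod_cast hreal
  calc (⌊ε * (ℓ * N : ℕ)⌋₊ : ℝ) + k ≤ ε * (ℓ * N : ℕ) + k := by
        gcongr
        exact Nat.floor_le (by positivity)
    _ = ℓ * ((k / (ℓ * N) + ε) * N) := by
        push_cast
        field_simp
        ring
    _ ≤ ℓ * n := by gcongr

theorem lt_mul_floor_mul_add_one {s n : ℕ} (hs : 0 < s) (hε : 1 ≤ s * ε) :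
    n < s * (⌊ε * n⌋₊ + 1) := by
  suffices hreal : (n : ℝ) < s * (⌊ε * n⌋₊ + 1) by exact_mod_cast hreal
  calc (n : ℝ) ≤ s * ε * n := le_mul_of_one_le_left n.cast_nonneg hε
    _ = s * (ε * n) := mul_assoc _ _ _
    _ < s * (⌊ε * n⌋₊ + 1) := by
        gcongr
        exact Nat.lt_floor_add_one _

theorem exists_subcode_ncard_sep_agreement_le [Finite K] {s N : ℕ} (hε : 1 ≤ s * ε)
    (hγ : orderOf γ = 8 * s ^ 2 * N) (hN : 0 < N) (k : ℕ) :
    ∃ ℱ ⊆ (degreeLT K k : Set K[X]), (Nat.card K : ℝ) ^ ((1 - ε) * k) ≤ ℱ.ncard ∧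
      ∀ y : Fin (8 * s ^ 2) → Fin N → K,
        {f ∈ ℱ | ((k : ℝ) / ((8 * s ^ 2 : ℕ) * N) + ε) * N ≤
          (agreementColumns γ y f).ncard}.ncard ≤ 4 * s ^ 2 := by
  have hs : 0 < s := Nat.pos_of_ne_zero fun h => by norm_num [h] at hε
  have hε0 : 0 < ε := pos_of_mul_pos_right (one_pos.trans_le hε) s.cast_nonneg
  have hℓ : 0 < 8 * s ^ 2 := by positivity
  rcases le_total k (8 * s ^ 2) with hk | hk
  · refine ⟨degreeLT K k, subset_rfl, rpow_le_of_pow_le_pow_mul (e := 0) Nat.card_pos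
      (by simpa using by positivity) ?_, fun y => ?_⟩
    · rw [pow_zero, one_mul, ← natCard_degreeLT]
      rfl
    · exact (ncard_sep_agreement_le_of_le hε hγ hN hk y).trans (by nlinarith)
  · obtain ⟨ℱ, hdegree, hcard, hlist⟩ :=
      exists_subcode_ncard_lt hγ (Nat.mul_pos hℓ hN) (hℓ.trans_le hk) (counting_exponent_lt hs hk)
    have he : ((k / s : ℕ) : ℝ) ≤ ε * k := by
      refine Nat.cast_div_le.trans ((div_le_iff₀' (Nat.cast_pos.2 hs)).2 ?_)
      rw [← mul_assoc]
      exact le_mul_of_one_le_left k.cast_nonneg hε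
    refine ⟨ℱ, hdegree, rpow_le_of_pow_le_pow_mul Nat.card_pos he hcard, fun y => ?_⟩
    have := Module.finite_of_finite K (M := degreeLT K k)
    have hfinite : ℱ.Finite := (Set.toFinite (degreeLT K k : Set K[X])).subset hdegree
    refine le_trans ?_ (hlist y _ (lt_mul_floor_mul_add_one hs hε)).le
    exact Set.ncard_le_ncard
      (fun f hf => ⟨hf.1, floor_add_le_mul_of_div_add_mul_le hε0.le hℓ hN hf.2⟩)
      (hfinite.subset (Set.sep_subset _ _))

end ListDecoding

theorem stmt_14_general.{u} {ε : ℝ} (hε : 0 < ε) (hε1 : ε ≤ 1) :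
    ∃ s ℓ : ℕ, 0 < s ∧ 0 < ℓ ∧ (s : ℝ) ≤ 32 / ε ∧ (ℓ : ℝ) ≤ 32 / ε ^ 2 ∧
      ∀ (K : Type u) [Field K] [Finite K] (γ : K) (N : ℕ), 0 < N → orderOf γ = ℓ * N → ∀ k : ℕ,
        ∃ ℱ : Set K[X], (∀ f ∈ ℱ, f.degree < k) ∧
          (Nat.card K : ℝ) ^ ((1 - ε) * k) ≤ ℱ.ncard ∧
          ∀ y : Fin ℓ → Fin N → K,
            ({f ∈ ℱ | ((k : ℝ) / (ℓ * N) + ε) * N ≤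
              (agreementColumns γ y f).ncard}.ncard : ℝ) ≤ 32 / ε ^ 2 := by
  have hs1 : 1 ≤ ⌈1 / ε⌉₊ * ε := (div_le_iff₀ hε).1 (Nat.le_ceil _)
  have hs2 : (⌈1 / ε⌉₊ : ℝ) ≤ 2 / ε :=
    calc (⌈1 / ε⌉₊ : ℝ) ≤ 1 / ε + 1 := (Nat.ceil_lt_add_one (by positivity)).le
      _ ≤ 1 / ε + 1 / ε := by gcongr; exact one_le_one_div hε hε1
      _ = 2 / ε := by ring
  have hsq : (⌈1 / ε⌉₊ : ℝ) ^ 2 ≤ 4 / ε ^ 2 :=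
    calc (⌈1 / ε⌉₊ : ℝ) ^ 2 ≤ (2 / ε) ^ 2 := by gcongr
      _ = 4 / ε ^ 2 := by rw [div_pow]; norm_num
  have hℓ : ((8 * ⌈1 / ε⌉₊ ^ 2 : ℕ) : ℝ) ≤ 32 / ε ^ 2 := by
    push_cast
    linear_combination 8 * hsq
  have hs : 0 < ⌈1 / ε⌉₊ := Nat.ceil_pos.2 (by positivity)
  refine ⟨⌈1 / ε⌉₊, 8 * ⌈1 / ε⌉₊ ^ 2, hs, by positivity, hs2.trans (by gcongr; norm_num), hℓ,
    fun K _ _ γ N hN hγ k => ?_⟩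
  obtain ⟨ℱ, hdegree, hcard, hlist⟩ := exists_subcode_ncard_sep_agreement_le hs1 hγ hN k
  refine ⟨ℱ, fun f hf => mem_degreeLT.1 (hdegree hf), hcard, fun y => ?_⟩
  exact (Nat.cast_le.2 ((hlist y).trans (by omega))).trans hℓ

/-- There is an absolute constant `C > 0` such that for every `ε ∈ (0,1)`
there are positive integers `s ≤ C/ε` and `ℓ ≤ C/ε²` with the following property. For any
prime power `q` with `ℓ ∣ q - 1`, any generator `γ` of `F_q^*`, `N = (q-1)/ℓ`, `ζ = γ^N`,
and any `k, a ≥ 1` with `a ∣ k` such that some monic irreducible `R ∈ F_q[X]` of degree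
`≥ k` divides `X^(q^a) - ζX`, there is a set `ℱ` of polynomials of degree `≤ k - 1` with
`|ℱ| ≥ q^((1-ε)k)` such that for every received array `(y_{i,j}) ∈ F_q^{ℓ×N}`, at most
`(C/ε)^(C/ε)` polynomials `f ∈ ℱ` have folded encoding agreeing with `y` on at least
`(k/(ℓN) + ε)·N` columns. -/
theorem stmt_14 :
    ∃ C : ℝ, 0 < C ∧
      ∀ ε : ℝ, 0 < ε → ε < 1 →
        ∃ s ℓ : ℕ, 0 < s ∧ 0 < ℓ ∧ (s : ℝ) ≤ C / ε ∧ (ℓ : ℝ) ≤ C / ε ^ 2 ∧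
          ∀ (Fq : Type) [Field Fq] [Fintype Fq],
            ℓ ∣ Fintype.card Fq - 1 →
            ∀ γ : Fq, orderOf γ = Fintype.card Fq - 1 →
            ∀ N : ℕ, ℓ * N = Fintype.card Fq - 1 →
            ∀ ζ : Fq, ζ = γ ^ N →
            ∀ k a : ℕ, 0 < k → 0 < a → a ∣ k →
              (∃ R : Polynomial Fq, R.Monic ∧ Irreducible R ∧ k ≤ R.natDegree ∧
                R ∣ (X ^ (Fintype.card Fq ^ a) - Polynomial.C ζ * X)) →
              ∃ ℱ : Set (Polynomial Fq),
                (∀ f ∈ ℱ, f.natDegree ≤ k - 1) ∧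
                (Fintype.card Fq : ℝ) ^ ((1 - ε) * k) ≤ (Nat.card ℱ : ℝ) ∧
                ∀ y : Fin ℓ → Fin N → Fq,
                  (Nat.card {f : Polynomial Fq // f ∈ ℱ ∧
                      ((k : ℝ) / (ℓ * N) + ε) * N ≤
                        (Nat.card {j : Fin N // ∀ i : Fin ℓ,
                          f.eval (ζ ^ (i : ℕ) * γ ^ (j : ℕ)) = y i j} : ℝ)} : ℝ)
                    ≤ (C / ε) ^ (C / ε) := by
  refine ⟨32, by norm_num, fun ε hε hε1 => ?_⟩
  obtain ⟨s, ℓ, hs, hℓ, hsle, hℓle, hcode⟩ := stmt_14_general hε hε1.le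
  refine ⟨s, ℓ, hs, hℓ, hsle, hℓle, fun K _ _ _ γ hγ N hN ζ hζ k a _ _ _ _ => ?_⟩
  subst hζ
  have hN0 : 0 < N := Nat.pos_of_mul_pos_left (hN ▸ Nat.sub_pos_of_lt Fintype.one_lt_card)
  obtain ⟨ℱ, hdegree, hcard, hlist⟩ := hcode K γ N hN0 (hγ.trans hN.symm) k
  refine ⟨ℱ, fun f hf => ?_, Nat.card_eq_fintype_card (α := K) ▸ hcard, fun y => ?_⟩
  · exact natDegree_le_pred (natDegree_le_of_degree_le (hdegree f hf).le)
      (coeff_eq_zero_of_degree_lt (hdegree f hf))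
  · exact (hlist y).trans (div_sq_le_rpow_div (by norm_num) hε hε1.le)
end

section
/- Let q be a prime power, γ a generator of F_q^*, ℓ a divisor of q−1, N = (q−1)/ℓ, and ζ = γ^N. Let f, g ∈ F_q[X] be distinct polynomials of degree at most k−1, where k ≤ ℓN. Then the number of indices j ∈ {0,…,N−1} such that f(ζ^i γ^j) = g(ζ^i γ^j) for all 0 ≤ i < ℓ is at most (k−1)/ℓ. Consequently, the low-order folded Reed–Solomon code of dimension k has minimum column distance at least N − (k−1)/ℓ. -/
open Polynomial

/-!
Each column on which the encodings of `f` and `g` agree contributes `ℓ` points at which `f` and `g`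
take the same value. Since `ζ ^ i * γ ^ j = γ ^ (j + N * i)`, every entry of the array is the
power of `γ` whose exponent is the entry's position in `Fin (ℓ * N)`, so all these points are
distinct. Two distinct polynomials of degree at most `k - 1` agree in at most `k - 1` points, hence
on at most `(k - 1) / ℓ` columns.
-/

theorem injective_uncurry_pow_pow_mul_pow {M : Type*} [Monoid M] {γ : M} {ℓ N : ℕ}
    (hγ : (Set.Iio (ℓ * N)).InjOn (γ ^ ·)) :
    (Function.uncurry fun (i : Fin ℓ) (j : Fin N) =>
      (γ ^ N) ^ (i : ℕ) * γ ^ (j : ℕ)).Injective := by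
  have entry_eq_pow (i : Fin ℓ) (j : Fin N) :
      (γ ^ N) ^ (i : ℕ) * γ ^ (j : ℕ) = γ ^ (finProdFinEquiv (i, j) : ℕ) := by
    rw [finProdFinEquiv_apply_val, ← pow_mul, ← pow_add, add_comm]
  rintro ⟨i, j⟩ ⟨i', j'⟩ h
  simp only [Function.uncurry_apply_pair, entry_eq_pow] at h
  exact finProdFinEquiv.injective <|
    Fin.ext <| hγ (finProdFinEquiv (i, j)).isLt (finProdFinEquiv (i', j')).isLt h

theorem natCard_agreeing_columns_add_natCard_differing_columns {ι κ α : Type*} [Finite κ]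
    (u v : ι → κ → α) :
    Nat.card {j // ∀ i, u i j = v i j} + Nat.card {j // ∃ i, u i j ≠ v i j} = Nat.card κ := by
  simp only [ne_eq, ← not_forall]
  exact Set.ncard_add_ncard_compl {j | ∀ i, u i j = v i j}

section EvaluationArray

variable {R : Type*} [CommRing R] [IsDomain R] {f g : R[X]} {d : ℕ}

theorem natCard_le_of_eval_eq {α : Type*} [Finite α] (hne : f ≠ g) (hf : f.natDegree ≤ d)
    (hg : g.natDegree ≤ d) {x : α → R} (hx : x.Injective)
    (h : ∀ a, f.eval (x a) = g.eval (x a)) : Nat.card α ≤ d := by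
  have := Fintype.ofFinite α
  by_contra! hd
  rw [Nat.card_eq_fintype_card] at hd
  exact hne (eq_of_natDegree_lt_card_of_eval_eq f g hx h ((max_le hf hg).trans_lt hd))

variable {ι κ : Type*} [Finite ι] [Finite κ] {x : ι → κ → R}

theorem natCard_agreeing_columns_mul_le (hne : f ≠ g) (hf : f.natDegree ≤ d)
    (hg : g.natDegree ≤ d) (hx : (Function.uncurry x).Injective) :
    Nat.card {j // ∀ i, f.eval (x i j) = g.eval (x i j)} * Nat.card ι ≤ d := by
  rw [mul_comm, ← Nat.card_prod]
  exact natCard_le_of_eval_eq hne hf hg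
    (hx.comp (Function.injective_id.prodMap Subtype.val_injective)) fun p => p.2.2 p.1

theorem natCard_agreeing_columns_le_div [Nonempty ι] (hne : f ≠ g) (hf : f.natDegree ≤ d)
    (hg : g.natDegree ≤ d) (hx : (Function.uncurry x).Injective) :
    (Nat.card {j // ∀ i, f.eval (x i j) = g.eval (x i j)} : ℝ) ≤ d / Nat.card ι := by
  rw [le_div_iff₀ (by exact_mod_cast Nat.card_pos)]
  exact_mod_cast natCard_agreeing_columns_mul_le hne hf hg hx

theorem sub_div_le_natCard_differing_columns [Nonempty ι] (hne : f ≠ g) (hf : f.natDegree ≤ d)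
    (hg : g.natDegree ≤ d) (hx : (Function.uncurry x).Injective) :
    (Nat.card κ : ℝ) - d / Nat.card ι ≤ Nat.card {j // ∃ i, f.eval (x i j) ≠ g.eval (x i j)} := by
  have agree_le := natCard_agreeing_columns_le_div hne hf hg hx
  rw [← natCard_agreeing_columns_add_natCard_differing_columns
    (fun i j => f.eval (x i j)) (fun i j => g.eval (x i j)), Nat.cast_add]
  linarith

end EvaluationArray

theorem stmt_15_general {R : Type*} [CommRing R] [IsDomain R] {γ : R} {ℓ N : ℕ} (hℓ : 0 < ℓ)
    (hγ : (Set.Iio (ℓ * N)).InjOn (γ ^ ·)) {ζ : R} (hζ : ζ = γ ^ N) {k : ℕ} (hk : 1 ≤ k)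
    {f g : R[X]} (hf : f.natDegree ≤ k - 1) (hg : g.natDegree ≤ k - 1) (hne : f ≠ g) :
    (Nat.card {j : Fin N // ∀ i : Fin ℓ,
        f.eval (ζ ^ (i : ℕ) * γ ^ (j : ℕ)) = g.eval (ζ ^ (i : ℕ) * γ ^ (j : ℕ))} : ℝ)
      ≤ ((k : ℝ) - 1) / ℓ ∧
    (N : ℝ) - ((k : ℝ) - 1) / ℓ ≤
      (Nat.card {j : Fin N // ∃ i : Fin ℓ,
        f.eval (ζ ^ (i : ℕ) * γ ^ (j : ℕ)) ≠ g.eval (ζ ^ (i : ℕ) * γ ^ (j : ℕ))} : ℝ) := by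
  subst hζ
  have : Nonempty (Fin ℓ) := Fin.pos_iff_nonempty.mp hℓ
  have entries_injective := injective_uncurry_pow_pow_mul_pow hγ
  rw [← Nat.cast_pred hk]
  constructor
  · simpa only [Nat.card_fin] using natCard_agreeing_columns_le_div hne hf hg entries_injective
  · simpa only [Nat.card_fin] using sub_div_le_natCard_differing_columns hne hf hg entries_injective

/-- Distance of the low-order folded Reed–Solomon code: if `f ≠ g` have
degree `≤ k - 1` with `k ≤ ℓN`, then the number of columns `j ∈ {0,…,N-1}` on which the
folded encodings of `f` and `g` agree (i.e. `f(ζ^i γ^j) = g(ζ^i γ^j)` for all `0 ≤ i < ℓ`)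
is at most `(k-1)/ℓ`; consequently the number of columns on which they differ is at least
`N - (k-1)/ℓ`. -/
theorem stmt_15 (Fq : Type) [Field Fq] [Fintype Fq] (γ : Fq)
    (hγ : orderOf γ = Fintype.card Fq - 1) (ℓ N : ℕ) (hℓ : 0 < ℓ)
    (hN : ℓ * N = Fintype.card Fq - 1) (ζ : Fq) (hζ : ζ = γ ^ N)
    (k : ℕ) (hk1 : 1 ≤ k) (hk2 : k ≤ ℓ * N)
    (f g : Polynomial Fq) (hf : f.natDegree ≤ k - 1) (hg : g.natDegree ≤ k - 1)
    (hne : f ≠ g) :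
    (Nat.card {j : Fin N // ∀ i : Fin ℓ,
        f.eval (ζ ^ (i : ℕ) * γ ^ (j : ℕ)) = g.eval (ζ ^ (i : ℕ) * γ ^ (j : ℕ))} : ℝ)
      ≤ ((k : ℝ) - 1) / ℓ ∧
    (N : ℝ) - ((k : ℝ) - 1) / ℓ ≤
      (Nat.card {j : Fin N // ∃ i : Fin ℓ,
        f.eval (ζ ^ (i : ℕ) * γ ^ (j : ℕ)) ≠ g.eval (ζ ^ (i : ℕ) * γ ^ (j : ℕ))} : ℝ) :=
  stmt_15_general hℓ (by simpa only [hN, hγ] using pow_injOn_Iio_orderOf (x := γ)) hζ hk1 hf hg hne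
end

section
/- Let q be a prime power, let ζ ∈ F_q^* have multiplicative order ℓ, and let a ≥ 1 be an integer. Then every monic irreducible factor of X^{q^a − 1} − ζ in F_q[X] has degree dividing aℓ; equivalently, X^{q^a−1} − ζ divides X^{q^{aℓ}−1} − 1 in F_q[X], so all roots of X^{q^a−1} − ζ lie in the field F_{q^{aℓ}}. -/
open Polynomial

/-!
Put `Q = q ^ a` and `N = 1 + Q + ⋯ + Q ^ (ℓ - 1)`, so that `Q ^ ℓ - 1 = (Q - 1) * N`. Modulo
`X ^ (Q - 1) - ζ` we get `X ^ (Q ^ ℓ - 1) = ζ ^ N`, and since `ζ ^ Q = ζ` every term of `N`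
contributes one factor `ζ`, whence `ζ ^ N = ζ ^ ℓ = 1`.
-/

theorem pow_geom_sum_of_pow_eq_self {M : Type*} [Monoid M] {z : M} {Q : ℕ} (hz : z ^ Q = z)
    (n : ℕ) : z ^ (∑ i ∈ Finset.range n, Q ^ i) = z ^ n := by
  have pow_pow_eq_self (i : ℕ) : z ^ Q ^ i = z := by
    induction i with
    | zero => rw [pow_zero, pow_one]
    | succ i ih => rw [pow_succ, pow_mul, ih, hz]
  induction n with
  | zero => rw [Finset.sum_range_zero]
  | succ n ih => rw [Finset.sum_range_succ, pow_add, ih, pow_pow_eq_self, pow_succ]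

section CommRing

variable {R : Type*} [CommRing R] {z : R} {Q n : ℕ}

theorem pow_pred_sub_dvd_pow_pow_pred_sub_one (hQ : 1 ≤ Q) (hzQ : z ^ Q = z) (hzn : z ^ n = 1)
    (x : R) : x ^ (Q - 1) - z ∣ x ^ (Q ^ n - 1) - 1 := by
  have h := sub_dvd_pow_sub_pow (x ^ (Q - 1)) z (∑ i ∈ Finset.range n, Q ^ i)
  rwa [← pow_mul, mul_comm (Q - 1), geom_sum_mul_of_one_le hQ,
    pow_geom_sum_of_pow_eq_self hzQ, hzn] at h

theorem pow_pred_sub_dvd_pow_pow_sub_self (hQ : 1 ≤ Q) (hzQ : z ^ Q = z) (hzn : z ^ n = 1)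
    (x : R) : x ^ (Q - 1) - z ∣ x ^ Q ^ n - x := by
  have h := (pow_pred_sub_dvd_pow_pow_pred_sub_one hQ hzQ hzn x).mul_right x
  rwa [sub_mul, one_mul, pow_sub_one_mul (pow_pos hQ n).ne'] at h

end CommRing

theorem stmt_16_general {K : Type*} [Field K] [Fintype K] {ζ : K} {n : ℕ} (hζ : ζ ^ n = 1)
    (a : ℕ) (A : Type*) [Ring A] [Algebra K A] :
    (∀ P : K[X], Irreducible P →
        P ∣ X ^ (Fintype.card K ^ a - 1) - C ζ → P.natDegree ∣ a * n) ∧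
    (X ^ (Fintype.card K ^ a - 1) - C ζ : K[X]) ∣ X ^ (Fintype.card K ^ (a * n) - 1) - 1 ∧
    (∀ x : A, x ^ (Fintype.card K ^ a - 1) = algebraMap K A ζ →
        x ^ Fintype.card K ^ (a * n) = x) := by
  have hQ : 1 ≤ Fintype.card K ^ a := Nat.one_le_pow _ _ Fintype.card_pos
  have hCQ : (C ζ : K[X]) ^ Fintype.card K ^ a = C ζ := by
    rw [← C_pow, FiniteField.pow_card_pow]
  have hCn : (C ζ : K[X]) ^ n = 1 := by rw [← C_pow, hζ, C_1]
  have hdvd := pow_pred_sub_dvd_pow_pow_sub_self hQ hCQ hCn X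
  rw [pow_mul]
  refine ⟨fun P hP hPdvd => ?_, pow_pred_sub_dvd_pow_pow_pred_sub_one hQ hCQ hCn X,
    fun x hx => ?_⟩
  · apply hP.natDegree_dvd_of_dvd_X_pow_card_pow_sub_X
    rw [Nat.card_eq_fintype_card, pow_mul]
    exact hPdvd.trans hdvd
  · have hdvd_aeval := map_dvd (aeval x) hdvd
    simpa [hx, sub_eq_zero] using hdvd_aeval

/-- Let `q` be a prime power, `ζ ∈ F_q^*` of multiplicative order `ℓ`, and
`a ≥ 1`. Then every monic irreducible factor of `X^(q^a - 1) - ζ` in `F_q[X]` has degree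
dividing `a*ℓ`; equivalently `X^(q^a - 1) - ζ` divides `X^(q^(a*ℓ) - 1) - 1`, so every root of
`X^(q^a - 1) - ζ` (in an algebraic closure) lies in the field `F_{q^(a*ℓ)}`, i.e. satisfies
`x^(q^(a*ℓ)) = x`. -/
theorem stmt_16 (Fq : Type) [Field Fq] [Fintype Fq] (ζ : Fq) (ℓ : ℕ) (hℓ : 0 < ℓ)
    (hζ : orderOf ζ = ℓ) (a : ℕ) (ha : 1 ≤ a) :
    (∀ P : Polynomial Fq, P.Monic → Irreducible P →
        P ∣ (X ^ (Fintype.card Fq ^ a - 1) - C ζ) → P.natDegree ∣ a * ℓ) ∧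
    (X ^ (Fintype.card Fq ^ a - 1) - C ζ : Polynomial Fq) ∣
        (X ^ (Fintype.card Fq ^ (a * ℓ) - 1) - 1) ∧
    (∀ x : AlgebraicClosure Fq,
        x ^ (Fintype.card Fq ^ a - 1) = algebraMap Fq (AlgebraicClosure Fq) ζ →
        x ^ (Fintype.card Fq ^ (a * ℓ)) = x) := by
  obtain ⟨hdegree, hdvd, hroots⟩ :=
    stmt_16_general (hζ ▸ pow_orderOf_eq_one ζ : ζ ^ ℓ = 1) a (AlgebraicClosure Fq)
  exact ⟨fun P _ => hdegree P, hdvd, hroots⟩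
end

section
/- Let q be a prime power, let a and ℓ be distinct primes with a > 2ℓ and ℓ dividing q−1, and let ζ ∈ F_q^* have multiplicative order ℓ. Then the polynomial X^{q^a−1} − ζ has exactly q^a − 1 distinct roots, all lying in F_{q^{aℓ}}, and at least (q^a − 1)/2 of these roots have minimal polynomial over F_q of degree exactly aℓ (equivalently, at least half of the roots generate F_{q^{aℓ}} over F_q). -/
/-!
Let `n` be the order of `ζ`, let `σ` be the `q`-power Frobenius, and let `x` be a root, so that
`σ ^ a` multiplies `x` by `ζ`. Then `σ ^ (a * k)` fixes `x` iff `n ∣ k`, which says that the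
degree `d` of `x` satisfies `d = n * gcd a d`. Hence `d = a * n` unless `b := gcd a d` is a
proper divisor of `a`. The quotient of two roots of degree `n * b` with the same `b` is fixed by
both `σ ^ a` and `σ ^ (n * b)`, hence by `σ ^ b`, so there are at most `q ^ b - 1` of them; and
the sum of these bounds over the proper divisors of `a` is at most `(q ^ a - 1) / 2`.
-/

section Counting

open Polynomial

variable {E : Type*} [Field E]

theorem natCard_isRoot_of_dvd_X_pow_card_sub_X [Finite E] {f : E[X]}
    (hf : f ∣ X ^ Nat.card E - X) : Nat.card {x : E // f.IsRoot x} = f.natDegree := by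
  classical
  have := Fintype.ofFinite E
  rw [Nat.card_eq_fintype_card] at hf
  have hne : (X ^ Fintype.card E - X : E[X]) ≠ 0 :=
    FiniteField.X_pow_card_sub_X_ne_zero E Fintype.one_lt_card
  have hroots := FiniteField.roots_X_pow_card_sub_X E
  have hsplits : (X ^ Fintype.card E - X : E[X]).Splits := by
    rw [splits_iff_card_roots, hroots,
      FiniteField.X_pow_card_sub_X_natDegree_eq E Fintype.one_lt_card]
    rfl
  have hnodup : f.roots.Nodup :=
    Multiset.nodup_of_le (hroots ▸ roots.le_of_dvd hne hf) Finset.univ.nodup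
  calc Nat.card {x : E // f.IsRoot x}
      = f.roots.toFinset.card := by
        rw [← Nat.card_eq_finsetCard]
        exact Nat.card_congr (Equiv.subtypeEquivRight fun x => by
          simp [ne_zero_of_dvd_ne_zero hne hf])
    _ = f.roots.card := Multiset.toFinset_card_of_nodup hnodup
    _ = f.natDegree := (hsplits.of_dvd hne hf).natDegree_eq_card_roots.symm

theorem natCard_pow_eq_of_card_eq_mul_add_one [Finite E] {m n : ℕ}
    (hE : Nat.card E = n * m + 1) {z : E} (hz : z ^ m = 1) :
    Nat.card {x : E // x ^ n = z} = n := by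
  have hdvd : (X ^ n - C z : E[X]) ∣ X ^ Nat.card E - X := by
    have hX : (X ^ Nat.card E - X : E[X]) = ((X ^ n) ^ m - C z ^ m) * X := by
      rw [hE, ← C_pow, hz, C_1]
      ring
    rw [hX]
    exact (sub_dvd_pow_sub_pow _ _ m).mul_right X
  simpa [sub_eq_zero] using natCard_isRoot_of_dvd_X_pow_card_sub_X hdvd

theorem ncard_pow_eq_and_pow_eq_le_gcd {m n : ℕ} (hm : m ≠ 0) {y z : E} (hy : y ≠ 0) :
    {x : E | x ^ m = y ∧ x ^ n = z}.ncard ≤ m.gcd n := by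
  classical
  obtain hempty | ⟨w, hwm, hwn⟩ := {x : E | x ^ m = y ∧ x ^ n = z}.eq_empty_or_nonempty
  · simp [hempty]
  have hw : w ≠ 0 := by
    rintro rfl
    exact hy (by rw [← hwm, zero_pow hm])
  have hsubset : {x : E | x ^ m = y ∧ x ^ n = z} ⊆
      (nthRoots (m.gcd n) (w ^ m.gcd n)).toFinset := by
    rintro x ⟨hxm, hxn⟩
    have hquot : (x / w) ^ m.gcd n = 1 :=
      pow_gcd_eq_one.mpr
        ⟨by rw [div_pow, hxm, hwm, div_self hy],
          by rw [div_pow, hxn, ← hwn, div_self (pow_ne_zero n hw)]⟩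
    rw [div_pow, div_eq_one_iff_eq (pow_ne_zero _ hw)] at hquot
    simpa [mem_nthRoots (Nat.gcd_pos_of_pos_left n hm.bot_lt)] using hquot
  calc {x : E | x ^ m = y ∧ x ^ n = z}.ncard
      ≤ (nthRoots (m.gcd n) (w ^ m.gcd n)).toFinset.card := by
        rw [← Set.ncard_coe_finset]
        exact Set.ncard_le_ncard hsubset
    _ ≤ (nthRoots (m.gcd n) (w ^ m.gcd n)).card := Multiset.toFinset_card_le _
    _ ≤ m.gcd n := card_nthRoots _ _

end Counting

section Arithmetic

theorem pow_sub_one_ne_zero {q a : ℕ} (hq : 1 < q) (ha : a ≠ 0) : q ^ a - 1 ≠ 0 :=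
  (Nat.sub_pos_of_lt (Nat.one_lt_pow ha hq)).ne'

theorem two_mul_sum_range_pow_sub_one_le {q : ℕ} (hq : 2 ≤ q) (m : ℕ) :
    2 * ∑ j ∈ Finset.range (m + 1), (q ^ j - 1) ≤ q ^ (2 * m) - 1 := by
  induction m with
  | zero => simp
  | succ m ih =>
    have hstep : q ^ (2 * m) + 2 * q ^ (m + 1) ≤ q ^ (2 * (m + 1)) + 2 := by
      have hmul : 2 * q ^ m ≤ q ^ (m + 1) := by
        rw [pow_succ']
        exact Nat.mul_le_mul_right _ hq
      have hone : 1 ≤ q ^ m := Nat.one_le_pow _ _ (by omega)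
      rw [mul_comm 2 m, mul_comm 2 (m + 1), pow_mul, pow_mul]
      nlinarith
    have hpos (j : ℕ) : 1 ≤ q ^ j := Nat.one_le_pow _ _ (by omega)
    have := hpos (2 * m)
    have := hpos (m + 1)
    rw [Finset.sum_range_succ, mul_add]
    omega

theorem two_mul_sum_properDivisors_pow_sub_one_le {q : ℕ} (hq : 2 ≤ q) (a : ℕ) :
    2 * ∑ b ∈ a.properDivisors, (q ^ b - 1) ≤ q ^ a - 1 := by
  have hsubset : a.properDivisors ⊆ Finset.range (a / 2 + 1) := by
    intro b hb
    obtain ⟨⟨c, rfl⟩, hlt⟩ := Nat.mem_properDivisors.mp hb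
    have hc : 2 ≤ c := by
      by_contra! h
      interval_cases c <;> omega
    have : b * 2 ≤ b * c := Nat.mul_le_mul_left b hc
    rw [Finset.mem_range]
    omega
  calc 2 * ∑ b ∈ a.properDivisors, (q ^ b - 1)
      ≤ 2 * ∑ j ∈ Finset.range (a / 2 + 1), (q ^ j - 1) := by gcongr
    _ ≤ q ^ (2 * (a / 2)) - 1 := two_mul_sum_range_pow_sub_one_le hq _
    _ ≤ q ^ a - 1 := by
        gcongr
        · omega
        · exact Nat.mul_div_le a 2

end Arithmetic

section Frobenius

variable {K L : Type*} [Field K] [Finite K] [Field L] [Algebra K L]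

theorem natDegree_minpoly_dvd_iff_pow_card_pow_eq {x : L} (hx : IsIntegral K x) {e : ℕ} :
    (minpoly K x).natDegree ∣ e ↔ x ^ Nat.card K ^ e = x := by
  rw [(minpoly.irreducible hx).natDegree_dvd_iff_dvd_X_pow_card_pow_sub_X, minpoly.dvd_iff]
  simp [sub_eq_zero]

theorem pow_card_pow_mul_eq {a : ℕ} {ζ : K} {x : L}
    (hx : x ^ Nat.card K ^ a = algebraMap K L ζ * x) (k : ℕ) :
    x ^ Nat.card K ^ (a * k) = algebraMap K L (ζ ^ k) * x := by
  have := Fintype.ofFinite K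
  induction k with
  | zero => simp
  | succ k ih =>
    have hζ : ζ ^ Nat.card K ^ (a * k) = ζ := by
      rw [Nat.card_eq_fintype_card, FiniteField.pow_card_pow]
    rw [mul_add_one, pow_add, mul_comm, pow_mul, hx, mul_pow, ← map_pow, hζ, ih, ← mul_assoc,
      ← map_mul, ← pow_succ']

theorem natDegree_minpoly_eq_orderOf_mul_gcd {a : ℕ} {ζ : K} {x : L} (hint : IsIntegral K x)
    (hx0 : x ≠ 0) (hx : x ^ Nat.card K ^ a = algebraMap K L ζ * x) :
    (minpoly K x).natDegree = orderOf ζ * a.gcd (minpoly K x).natDegree := by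
  set d := (minpoly K x).natDegree
  have hdvd (k : ℕ) : d ∣ a * k ↔ orderOf ζ ∣ k := by
    rw [natDegree_minpoly_dvd_iff_pow_card_pow_eq hint, pow_card_pow_mul_eq hx,
      mul_eq_right₀ hx0, map_eq_one_iff _ (algebraMap K L).injective,
      orderOf_dvd_iff_pow_eq_one]
  obtain ⟨c, hc⟩ : a.gcd d ∣ d := Nat.gcd_dvd_right a d
  have horder_dvd : orderOf ζ ∣ c :=
    (hdvd c).mp (hc ▸ mul_dvd_mul_right (Nat.gcd_dvd_left a d) c)
  refine Nat.dvd_antisymm ?_ ?_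
  · rw [mul_comm, Nat.gcd_comm, Nat.dvd_gcd_mul_iff_dvd_mul]
    exact (hdvd _).mpr dvd_rfl
  · rw [mul_comm]
    nth_rw 2 [hc]
    exact mul_dvd_mul_left _ horder_dvd

variable {a : ℕ} {ζ : K}

theorem ne_zero_of_pow_card_pow_sub_one_eq (ha : a ≠ 0) (hζ : ζ ≠ 0) {x : L}
    (hx : x ^ (Nat.card K ^ a - 1) = algebraMap K L ζ) : x ≠ 0 := by
  rw [← pow_ne_zero_iff (pow_sub_one_ne_zero (Finite.one_lt_card (α := K)) ha), hx]
  exact (map_ne_zero _).mpr hζ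

variable [Finite L]

theorem natDegree_eq_orderOf_mul_gcd_of_pow_card_pow_sub_one_eq (ha : a ≠ 0) (hζ : ζ ≠ 0) {x : L}
    (hx : x ^ (Nat.card K ^ a - 1) = algebraMap K L ζ) :
    (minpoly K x).natDegree = orderOf ζ * a.gcd (minpoly K x).natDegree := by
  refine natDegree_minpoly_eq_orderOf_mul_gcd (.of_finite K x)
    (ne_zero_of_pow_card_pow_sub_one_eq ha hζ hx) ?_
  rw [← hx, pow_sub_one_mul (pow_ne_zero a Nat.card_pos.ne')]

theorem ncard_pow_eq_and_gcd_natDegree_eq_le (ha : a ≠ 0) (hζ : ζ ≠ 0) (b : ℕ) :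
    {x : L | x ^ (Nat.card K ^ a - 1) = algebraMap K L ζ ∧
      a.gcd (minpoly K x).natDegree = b}.ncard ≤ Nat.card K ^ b - 1 := by
  set q := Nat.card K
  set S := {x : L | x ^ (q ^ a - 1) = algebraMap K L ζ ∧ a.gcd (minpoly K x).natDegree = b}
  have hdeg {x : L} (hx : x ∈ S) : (minpoly K x).natDegree = orderOf ζ * b := by
    rw [natDegree_eq_orderOf_mul_gcd_of_pow_card_pow_sub_one_eq ha hζ hx.1, hx.2]
  obtain hempty | ⟨w, hw⟩ := S.eq_empty_or_nonempty
  · simp [hempty]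
  have hgcd : a.gcd (orderOf ζ * b) = b := hdeg hw ▸ hw.2
  have hsubset : S ⊆
      {x | x ^ (q ^ a - 1) = algebraMap K L ζ ∧ x ^ (q ^ (orderOf ζ * b) - 1) = 1} := by
    intro x hx
    have hx0 : x ≠ 0 := ne_zero_of_pow_card_pow_sub_one_eq ha hζ hx.1
    have hfix : x ^ q ^ (orderOf ζ * b) = x :=
      (natDegree_minpoly_dvd_iff_pow_card_pow_eq (.of_finite K x)).mp (hdeg hx).dvd
    exact ⟨hx.1, by
      rwa [← mul_eq_right₀ hx0, pow_sub_one_mul (pow_ne_zero _ Nat.card_pos.ne')]⟩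
  calc S.ncard
      ≤ _ := Set.ncard_le_ncard hsubset
    _ ≤ (q ^ a - 1).gcd (q ^ (orderOf ζ * b) - 1) :=
      ncard_pow_eq_and_pow_eq_le_gcd (pow_sub_one_ne_zero Finite.one_lt_card ha)
        ((map_ne_zero _).mpr hζ)
    _ = q ^ b - 1 := by rw [Nat.pow_sub_one_gcd_pow_sub_one, hgcd]

theorem ncard_pow_eq_and_natDegree_ne_le (ha : a ≠ 0) (hζ : ζ ≠ 0) :
    {x : L | x ^ (Nat.card K ^ a - 1) = algebraMap K L ζ ∧
      (minpoly K x).natDegree ≠ a * orderOf ζ}.ncard ≤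
        ∑ b ∈ a.properDivisors, (Nat.card K ^ b - 1) := by
  let S (b : ℕ) := {x : L | x ^ (Nat.card K ^ a - 1) = algebraMap K L ζ ∧
    a.gcd (minpoly K x).natDegree = b}
  have hsubset : {x : L | x ^ (Nat.card K ^ a - 1) = algebraMap K L ζ ∧
      (minpoly K x).natDegree ≠ a * orderOf ζ} ⊆ ⋃ b ∈ a.properDivisors, S b := by
    rintro x ⟨hx, hne⟩
    have hproper : a.gcd (minpoly K x).natDegree ≠ a := by
      intro h
      have hdeg := natDegree_eq_orderOf_mul_gcd_of_pow_card_pow_sub_one_eq ha hζ hx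
      rw [h, mul_comm] at hdeg
      exact hne hdeg
    have hdvd : a.gcd (minpoly K x).natDegree ∣ a := Nat.gcd_dvd_left _ _
    simp only [Set.mem_iUnion]
    exact ⟨_, Nat.mem_properDivisors.mpr
      ⟨hdvd, (Nat.le_of_dvd ha.bot_lt hdvd).lt_of_ne hproper⟩, hx, rfl⟩
  calc _ ≤ (⋃ b ∈ a.properDivisors, S b).ncard := Set.ncard_le_ncard hsubset
    _ ≤ ∑ b ∈ a.properDivisors, (S b).ncard := Finset.set_ncard_biUnion_le _ _
    _ ≤ ∑ b ∈ a.properDivisors, (Nat.card K ^ b - 1) :=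
      Finset.sum_le_sum fun b _ => ncard_pow_eq_and_gcd_natDegree_eq_le ha hζ b

theorem natCard_pow_card_pow_sub_one_eq
    (hL : Nat.card L = Nat.card K ^ (a * orderOf ζ)) :
    Nat.card {x : L // x ^ (Nat.card K ^ a - 1) = algebraMap K L ζ} = Nat.card K ^ a - 1 := by
  have := Fintype.ofFinite K
  have hpow : ζ ^ ∑ i ∈ Finset.range (orderOf ζ), (Nat.card K ^ a) ^ i = 1 := by
    simp only [← Finset.prod_pow_eq_pow_sum, ← pow_mul, Nat.card_eq_fintype_card,
      FiniteField.pow_card_pow, Finset.prod_const, Finset.card_range, pow_orderOf_eq_one]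
  refine natCard_pow_eq_of_card_eq_mul_add_one
    (m := ∑ i ∈ Finset.range (orderOf ζ), (Nat.card K ^ a) ^ i) ?_
    (by rw [← map_pow, hpow, map_one])
  have hgeom := geom_sum_mul_add (Nat.card K ^ a - 1) (orderOf ζ)
  rw [Nat.sub_add_cancel (Nat.one_le_pow _ _ Nat.card_pos)] at hgeom
  rw [hL, pow_mul, ← hgeom, mul_comm]

end Frobenius

theorem stmt_18_general {K L : Type*} [Field K] [Finite K] [Field L] [Finite L] [Algebra K L]
    (a : ℕ) (ζ : K) (hL : Nat.card L = Nat.card K ^ (a * orderOf ζ)) :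
    Nat.card {x : L // x ^ (Nat.card K ^ a - 1) = algebraMap K L ζ} = Nat.card K ^ a - 1 ∧
    Nat.card K ^ a - 1 ≤
      2 * Nat.card {x : L // x ^ (Nat.card K ^ a - 1) = algebraMap K L ζ ∧
        (minpoly K x).natDegree = a * orderOf ζ} := by
  have hroots := natCard_pow_card_pow_sub_one_eq hL
  refine ⟨hroots, ?_⟩
  have hexp : a * orderOf ζ ≠ 0 := by
    intro h
    exact Finite.one_lt_card.ne' (by rw [hL, h, pow_zero])
  obtain ⟨ha, horder⟩ := mul_ne_zero_iff.mp hexp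
  have hζ : ζ ≠ 0 := by
    rintro rfl
    exact horder (orderOf_zero K)
  set R := {x : L | x ^ (Nat.card K ^ a - 1) = algebraMap K L ζ}
  set D := {x : L | (minpoly K x).natDegree = a * orderOf ζ}
  have hsplit : (R ∩ D).ncard + (R \ D).ncard = Nat.card K ^ a - 1 :=
    (Set.ncard_inter_add_ncard_sdiff_eq_ncard R D).trans hroots
  have hdiff : (R \ D).ncard ≤ ∑ b ∈ a.properDivisors, (Nat.card K ^ b - 1) :=
    ncard_pow_eq_and_natDegree_ne_le ha hζ
  have hsum : 2 * ∑ b ∈ a.properDivisors, (Nat.card K ^ b - 1) ≤ Nat.card K ^ a - 1 :=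
    two_mul_sum_properDivisors_pow_sub_one_le Finite.one_lt_card a
  change Nat.card K ^ a - 1 ≤ 2 * (R ∩ D).ncard
  omega

/-- Let `q` be a prime power, let `a` and `ℓ` be distinct primes with
`a > 2ℓ` and `ℓ ∣ q - 1`, and let `ζ ∈ F_q^*` have multiplicative order `ℓ`. Then, in the
field `E = F_{q^(aℓ)}`, the polynomial `X^(q^a - 1) - ζ` has exactly `q^a - 1` distinct roots
(so all of its roots lie in `F_{q^(aℓ)}`), and at least `(q^a - 1)/2` of these roots have
minimal polynomial over `F_q` of degree exactly `aℓ`. -/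
theorem stmt_18 (Fq E : Type) [Field Fq] [Fintype Fq] [Field E] [Fintype E] [Algebra Fq E]
    (a ℓ : ℕ) (hap : a.Prime) (hlp : ℓ.Prime) (hne : a ≠ ℓ) (haℓ : 2 * ℓ < a)
    (hdvd : ℓ ∣ Fintype.card Fq - 1) (ζ : Fq) (hζ : orderOf ζ = ℓ)
    (hE : Fintype.card E = Fintype.card Fq ^ (a * ℓ)) :
    Nat.card {x : E // x ^ (Fintype.card Fq ^ a - 1) = algebraMap Fq E ζ}
        = Fintype.card Fq ^ a - 1 ∧
    Fintype.card Fq ^ a - 1 ≤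
      2 * Nat.card {x : E // x ^ (Fintype.card Fq ^ a - 1) = algebraMap Fq E ζ ∧
        (minpoly Fq x).natDegree = a * ℓ} := by
  subst hζ
  simp only [Fintype.card_eq_nat_card] at hE ⊢
  exact stmt_18_general a ζ hE
end
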